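/- Let I be the 2×2 identity over ℂ, X = !![0,1;1,0], CNOT = !![1,0,0,0;0,1,0,0;0,0,0,1;0,0,1,0], Pplus = (1/2) • !![1,1;1,1] (the projector onto |+⟩ = (|0⟩+|1⟩)/√2), and P0 = !![1,0;0,0] (the projector onto |0⟩). Then for all a, b ∈ ℂ and all v ∈ ℂ² (states on qubits 1 and 4, with the Bell state (|00⟩+|11⟩)/√2 on qubits 2 and 3): ((I ⊗ₖ P0 ⊗ₖ Pplus ⊗ₖ I) * (CNOT ⊗ₖ CNOT)).mulVec (![a,b] ⊗ₜ ((1/√2) • ![1,0,0,1]) ⊗ₜ v) = (1/2) • (![a,0] ⊗ₜ (((1/√2) • ![1,1]) ⊗ₜ v) + ![0,b] ⊗ₜ (((1/√2) • ![1,1]) ⊗ₜ (X.mulVec v))); that is, the +1,+1-outcome branch of the remote-XOR protocol leaves qubits 1 and 4 in the state CNOT₁₄((a|0⟩+b|1⟩) ⊗ v), with |0⟩ on qubit 2 and |+⟩ on qubit 3. -/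

import Mathlib

open Matrix

noncomputable def X : Matrix (Fin 2) (Fin 2) ℂ := !![0, 1; 1, 0]
noncomputable def I2 : Matrix (Fin 2) (Fin 2) ℂ := 1

/-- Controlled-NOT with control on the first qubit. -/
noncomputable def CNOT : Matrix (Fin 4) (Fin 4) ℂ :=
  !![1, 0, 0, 0; 0, 1, 0, 0; 0, 0, 0, 1; 0, 0, 1, 0]

/-- The projector onto `|+⟩ = (|0⟩+|1⟩)/√2`. -/
noncomputable def Pplus : Matrix (Fin 2) (Fin 2) ℂ := (1 / 2 : ℂ) • !![1, 1; 1, 1]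

/-- The projector onto `|0⟩`. -/
noncomputable def P0 : Matrix (Fin 2) (Fin 2) ℂ := !![1, 0; 0, 0]

/-- Kronecker product of square matrices, reindexed to `Fin (m * n)`
with lexicographic (big-endian) ordering of the basis. -/
noncomputable def mkron {m n : ℕ} (A : Matrix (Fin m) (Fin m) ℂ)
    (B : Matrix (Fin n) (Fin n) ℂ) : Matrix (Fin (m * n)) (Fin (m * n)) ℂ :=
  Matrix.reindex finProdFinEquiv finProdFinEquiv (Matrix.kroneckerMap (· * ·) A B)

infixl:100 " ⊗ₖ " => mkron

/-- Kronecker product of vectors, with lexicographic (big-endian) ordering. -/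
noncomputable def tkron {m n : ℕ} (v : Fin m → ℂ) (w : Fin n → ℂ) : Fin (m * n) → ℂ :=
  fun i => v (finProdFinEquiv.symm i).1 * w (finProdFinEquiv.symm i).2

infixl:100 " ⊗ₜ " => tkron

theorem mkron_mulVec_tkron {m n : ℕ} (A : Matrix (Fin m) (Fin m) ℂ)
    (B : Matrix (Fin n) (Fin n) ℂ) (v : Fin m → ℂ) (w : Fin n → ℂ) :
    (A ⊗ₖ B).mulVec (v ⊗ₜ w) = A.mulVec v ⊗ₜ B.mulVec w := by
  ext i
  simp only [mulVec, dotProduct, mkron, tkron, Finset.sum_mul_sum, ← Fintype.sum_prod_type',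
    ← finProdFinEquiv.sum_comp, reindex_apply, submatrix_apply, kroneckerMap_apply,
    Equiv.symm_apply_apply]
  exact Finset.sum_congr rfl fun _ _ => mul_mul_mul_comm _ _ _ _

theorem tkron_add {m n : ℕ} (v : Fin m → ℂ) (w w' : Fin n → ℂ) :
    v ⊗ₜ (w + w') = v ⊗ₜ w + v ⊗ₜ w' :=
  funext fun _ => mul_add _ _ _

theorem add_tkron {m n : ℕ} (v v' : Fin m → ℂ) (w : Fin n → ℂ) :
    (v + v') ⊗ₜ w = v ⊗ₜ w + v' ⊗ₜ w :=
  funext fun _ => add_mul _ _ _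

theorem tkron_smul {m n : ℕ} (c : ℂ) (v : Fin m → ℂ) (w : Fin n → ℂ) :
    v ⊗ₜ (c • w) = c • (v ⊗ₜ w) :=
  funext fun _ => mul_left_comm _ _ _

theorem smul_tkron {m n : ℕ} (c : ℂ) (v : Fin m → ℂ) (w : Fin n → ℂ) :
    (c • v) ⊗ₜ w = c • (v ⊗ₜ w) :=
  funext fun _ => mul_assoc _ _ _

/-- Splitting four qubits as `((1 2) 3) 4` or as `(1 2) (3 4)` gives the same coordinates. -/
theorem qubit_index_left_assoc (i : Fin 16) :
    let l := (finProdFinEquiv (m := 8) (n := 2)).symm i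
    let l' := (finProdFinEquiv (m := 4) (n := 2)).symm l.1
    let p := (finProdFinEquiv (m := 4) (n := 4)).symm i
    let q := (finProdFinEquiv (m := 2) (n := 2)).symm p.2
    l'.1 = p.1 ∧ l'.2 = q.1 ∧ l.2 = q.2 := by
  revert i
  decide

/-- Splitting four qubits as `(1 (2 3)) 4` or as `(1 2) (3 4)` gives the same coordinates. -/
theorem qubit_index_middle_assoc (i : Fin 16) :
    let l := (finProdFinEquiv (m := 8) (n := 2)).symm i
    let l' := (finProdFinEquiv (m := 2) (n := 4)).symm l.1
    let r := (finProdFinEquiv (m := 2) (n := 2)).symm l'.2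
    let p := (finProdFinEquiv (m := 4) (n := 4)).symm i
    let q := (finProdFinEquiv (m := 2) (n := 2)).symm p.1
    let q' := (finProdFinEquiv (m := 2) (n := 2)).symm p.2
    l'.1 = q.1 ∧ r.1 = q.2 ∧ r.2 = q'.1 ∧ l.2 = q'.2 := by
  revert i
  decide

theorem mkron_assoc_qubits (A : Matrix (Fin 4) (Fin 4) ℂ) (C D : Matrix (Fin 2) (Fin 2) ℂ) :
    (A ⊗ₖ C ⊗ₖ D : Matrix (Fin 16) (Fin 16) ℂ) = A ⊗ₖ (C ⊗ₖ D) := by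
  ext i j
  obtain ⟨hi, hi', hi''⟩ := qubit_index_left_assoc i
  obtain ⟨hj, hj', hj''⟩ := qubit_index_left_assoc j
  have key : ∀ {x x' y y' : Fin 4} {s s' t t' z z' w w' : Fin 2},
      x = x' → y = y' → s = s' → t = t' → z = z' → w = w' →
      A x y * C s t * D z w = A x' y' * (C s' t' * D z' w') := by
    rintro _ _ _ _ _ _ _ _ _ _ _ _ rfl rfl rfl rfl rfl rfl
    exact mul_assoc _ _ _
  exact key hi hj hi' hj' hi'' hj''

theorem tkron_middle_assoc_qubits (p q r s : Fin 2 → ℂ) :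
    (p ⊗ₜ (q ⊗ₜ r) ⊗ₜ s : Fin 16 → ℂ) = (p ⊗ₜ q) ⊗ₜ (r ⊗ₜ s) := by
  ext i
  obtain ⟨h₁, h₂, h₃, h₄⟩ := qubit_index_middle_assoc i
  have key : ∀ {w w' x x' y y' z z' : Fin 2}, w = w' → x = x' → y = y' → z = z' →
      p w * (q x * r y) * s z = p w' * q x' * (r y' * s z') := by
    rintro _ _ _ _ _ _ _ _ rfl rfl rfl rfl
    ring
  exact key h₁ h₂ h₃ h₄

theorem tkron_qubits (v w : Fin 2 → ℂ) :
    v ⊗ₜ w = (![v 0 * w 0, v 0 * w 1, v 1 * w 0, v 1 * w 1] : Fin 4 → ℂ) := by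
  funext i
  fin_cases i <;> rfl

theorem bell_eq_tkron :
    (![1, 0, 0, 1] : Fin 4 → ℂ) =
      (![1, 0] : Fin 2 → ℂ) ⊗ₜ (![1, 0] : Fin 2 → ℂ) +
        (![0, 1] : Fin 2 → ℂ) ⊗ₜ (![0, 1] : Fin 2 → ℂ) := by
  rw [tkron_qubits, tkron_qubits]
  ext i
  fin_cases i <;> simp

theorem CNOT_mulVec_zero_tkron (v : Fin 2 → ℂ) :
    CNOT.mulVec ((![1, 0] : Fin 2 → ℂ) ⊗ₜ v) = (![1, 0] : Fin 2 → ℂ) ⊗ₜ v := by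
  rw [tkron_qubits]
  ext i
  fin_cases i <;> simp [CNOT, mulVec, dotProduct, Fin.sum_univ_four]

theorem CNOT_mulVec_one_tkron (v : Fin 2 → ℂ) :
    CNOT.mulVec ((![0, 1] : Fin 2 → ℂ) ⊗ₜ v) = (![0, 1] : Fin 2 → ℂ) ⊗ₜ X.mulVec v := by
  rw [tkron_qubits, tkron_qubits]
  ext i
  fin_cases i <;> simp [CNOT, X, mulVec, dotProduct, Fin.sum_univ_four, Fin.sum_univ_two]

theorem I2_mulVec (v : Fin 2 → ℂ) : I2.mulVec v = v :=
  one_mulVec v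

theorem P0_mulVec (v : Fin 2 → ℂ) : P0.mulVec v = v 0 • ![1, 0] := by
  ext i
  fin_cases i <;> simp [P0, mulVec, dotProduct, Fin.sum_univ_two]

theorem Pplus_mulVec (v : Fin 2 → ℂ) :
    Pplus.mulVec v = ((v 0 + v 1) / 2) • ![1, 1] := by
  ext i
  fin_cases i <;> simp [Pplus, mulVec, dotProduct, Fin.sum_univ_two] <;> ring

theorem X_mulVec (v : Fin 2 → ℂ) : X.mulVec v = ![v 1, v 0] := by
  ext i
  fin_cases i <;> simp [X, mulVec, dotProduct, Fin.sum_univ_two]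

/-- A CNOT followed by projecting its target onto `|0⟩`. -/
theorem project_target_CNOT (a b : ℂ) (t : Fin 2 → ℂ) :
    (I2 ⊗ₖ P0).mulVec (CNOT.mulVec ((![a, b] : Fin 2 → ℂ) ⊗ₜ t)) =
      (![a * t 0, b * t 1] : Fin 2 → ℂ) ⊗ₜ (![1, 0] : Fin 2 → ℂ) := by
  have hab : (![a, b] : Fin 2 → ℂ) = a • ![1, 0] + b • ![0, 1] := by simp
  have hout : (![a * t 0, b * t 1] : Fin 2 → ℂ) =
      (a * t 0) • ![1, 0] + (b * t 1) • ![0, 1] := by simp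
  rw [hab, hout]
  simp only [add_tkron, smul_tkron, mulVec_add, mulVec_smul, CNOT_mulVec_zero_tkron,
    CNOT_mulVec_one_tkron]
  erw [mkron_mulVec_tkron, mkron_mulVec_tkron]
  rw [I2_mulVec, I2_mulVec, P0_mulVec, P0_mulVec, X_mulVec]
  simp only [tkron_smul, smul_smul, cons_val_zero]

/-- The projected protocol circuit on a product of a state of qubits 1, 2 and one of 3, 4. -/
theorem branch_mulVec_tkron (u w : Fin 4 → ℂ) :
    ((I2 ⊗ₖ P0 ⊗ₖ Pplus ⊗ₖ I2) * (CNOT ⊗ₖ CNOT) : Matrix (Fin 16) (Fin 16) ℂ).mulVec (u ⊗ₜ w) =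
      (I2 ⊗ₖ P0).mulVec (CNOT.mulVec u) ⊗ₜ (Pplus ⊗ₖ I2).mulVec (CNOT.mulVec w) := by
  rw [← mulVec_mulVec]
  refine (congrArg₂ mulVec (mkron_assoc_qubits (I2 ⊗ₖ P0) Pplus I2)
    (mkron_mulVec_tkron CNOT CNOT u w)).trans ?_
  exact mkron_mulVec_tkron _ _ _ _

/-- The `+1, +1`-outcome branch of the remote-XOR protocol: with a Bell pair on qubits
2 and 3, after `CNOT(1→2)` and `CNOT(3→4)`, projecting qubit 2 onto `|0⟩` and qubit 3
onto `|+⟩` leaves qubits 1 and 4 in the state `CNOT₁₄((a|0⟩+b|1⟩) ⊗ v)`, with `|0⟩` on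
qubit 2 and `|+⟩` on qubit 3. -/
theorem remote_xor_plus_plus_branch (a b : ℂ) (v : Fin 2 → ℂ) :
    (((I2 ⊗ₖ P0 ⊗ₖ Pplus ⊗ₖ I2) * (CNOT ⊗ₖ CNOT) : Matrix (Fin 16) (Fin 16) ℂ)).mulVec
        (((![a, b] : Fin 2 → ℂ) ⊗ₜ
          ((1 / (Real.sqrt 2 : ℂ)) • (![1, 0, 0, 1] : Fin 4 → ℂ)) ⊗ₜ v : Fin 16 → ℂ)) =
      (1 / 2 : ℂ) •
        (((![a, 0] : Fin 2 → ℂ) ⊗ₜ (![1, 0] : Fin 2 → ℂ) ⊗ₜ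
            (((1 / (Real.sqrt 2 : ℂ)) • (![1, 1] : Fin 2 → ℂ)) ⊗ₜ v) : Fin 16 → ℂ) +
         ((![0, b] : Fin 2 → ℂ) ⊗ₜ (![1, 0] : Fin 2 → ℂ) ⊗ₜ
            (((1 / (Real.sqrt 2 : ℂ)) • (![1, 1] : Fin 2 → ℂ)) ⊗ₜ X.mulVec v) :
            Fin 16 → ℂ)) := by
  have hin : ((![a, b] : Fin 2 → ℂ) ⊗ₜ
      ((1 / (Real.sqrt 2 : ℂ)) • (![1, 0, 0, 1] : Fin 4 → ℂ)) ⊗ₜ v : Fin 16 → ℂ) =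
      (1 / (Real.sqrt 2 : ℂ)) •
        ((![a, b] ⊗ₜ ![1, 0]) ⊗ₜ (![1, 0] ⊗ₜ v) + (![a, b] ⊗ₜ ![0, 1]) ⊗ₜ (![0, 1] ⊗ₜ v)) := by
    rw [← tkron_middle_assoc_qubits, ← tkron_middle_assoc_qubits, bell_eq_tkron]
    erw [tkron_smul, smul_tkron, tkron_add, add_tkron]
  have h₀ : (Pplus ⊗ₖ I2).mulVec (CNOT.mulVec (![1, 0] ⊗ₜ v)) =
      (1 / 2 : ℂ) • ((![1, 1] : Fin 2 → ℂ) ⊗ₜ v) := by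
    rw [CNOT_mulVec_zero_tkron]
    erw [mkron_mulVec_tkron]
    rw [Pplus_mulVec, I2_mulVec, smul_tkron]
    simp
  have h₁ : (Pplus ⊗ₖ I2).mulVec (CNOT.mulVec (![0, 1] ⊗ₜ v)) =
      (1 / 2 : ℂ) • ((![1, 1] : Fin 2 → ℂ) ⊗ₜ X.mulVec v) := by
    rw [CNOT_mulVec_one_tkron]
    erw [mkron_mulVec_tkron]
    rw [Pplus_mulVec, I2_mulVec, smul_tkron]
    simp
  rw [hin, mulVec_smul, mulVec_add]
  erw [branch_mulVec_tkron, branch_mulVec_tkron, project_target_CNOT, project_target_CNOT, h₀, h₁]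
  simp only [tkron_smul, smul_tkron, cons_val_zero, cons_val_one, mul_one, mul_zero]
  rw [← smul_add, ← smul_add, smul_comm]
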